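/- For every edge e ∈ E, there is no linear subspace of the space of real vectors indexed by V ⊔ {1,2,3} ⊔ {ε} that is spanned by at most n vectors, contains the column M(G)(·, e), and, for every vertex v ∈ V, contains some vector C_v whose Euclidean distance to the column M(G)(·, (v,1)) is strictly less than 1/(n+1). -/

import Mathlib

open Matrix

/-- The Frobenius norm of a real matrix: the square root of the sum of squares of entries. -/
noncomputable def frob {α β : Type*} [Fintype α] [Fintype β] (X : Matrix α β ℝ) : ℝ :=
  Real.sqrt (∑ i, ∑ j, X i j ^ 2)

/-- The matrix `M(G)` of the reduction: rows indexed by `V ⊕ {1,2,3} ⊕ {ε}`,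
columns indexed by `(V × {1,2,3}) ⊕ E`. -/
def MG {V : Type*} [Fintype V] [DecidableEq V] (G : SimpleGraph V) [DecidableRel G.Adj]
    (t : ℝ) : Matrix (V ⊕ Fin 3 ⊕ Unit) ((V × Fin 3) ⊕ G.edgeSet) ℝ :=
  fun r c =>
    match r, c with
    | Sum.inl u, Sum.inl (v, _) => if u = v then (1 : ℝ) else 0
    | Sum.inl u, Sum.inr e => if u ∈ (e : Sym2 V) then t ^ 2 else 0
    | Sum.inr (Sum.inl i), Sum.inl (_, j) => if i = j then t ^ 3 else 0
    | Sum.inr (Sum.inl _), Sum.inr _ => t ^ 5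
    | Sum.inr (Sum.inr _), Sum.inl _ => 0
    | Sum.inr (Sum.inr _), Sum.inr _ => t

/-!
On the `n + 1` rows `V ⊔ {ε}`, the column of `(v, 1)` is the unit vector at `v`, so `C_v` is that
unit vector up to an `ℓ¹` error less than `1`. The column of `e` divided by `t` is there the unit
vector at `ε` up to an `ℓ¹` error of `2 |t| < 1`, since `e` has two endpoints. A square matrix whose
rows have `ℓ¹` distance less than `1` from those of the identity is strictly diagonally dominant, so
the vectors `C_v` and the column of `e` are linearly independent, and any subspace containing them
has dimension at least `n + 1`.
-/

section DiagonalDominance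

variable {ι K : Type*} [Fintype ι] [DecidableEq ι] [NormedField K]

theorem det_ne_zero_of_sum_norm_sub_one_lt_one {A : Matrix ι ι K}
    (h : ∀ k, ∑ j, ‖A k j - (1 : Matrix ι ι K) k j‖ < 1) : A.det ≠ 0 := by
  refine det_ne_zero_of_sum_row_lt_diag fun k ↦ ?_
  have off_diag : ∑ j ∈ Finset.univ.erase k, ‖A k j - (1 : Matrix ι ι K) k j‖ =
      ∑ j ∈ Finset.univ.erase k, ‖A k j‖ :=
    Finset.sum_congr rfl fun j hj ↦ by
      rw [one_apply_ne (Finset.ne_of_mem_erase hj).symm, sub_zero]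
  have row_sum := h k
  rw [← Finset.sum_erase_add _ _ (Finset.mem_univ k), off_diag, one_apply_eq] at row_sum
  have diag : 1 ≤ ‖A k k‖ + ‖A k k - 1‖ := by
    simpa using norm_sub_le (A k k) (A k k - 1)
  linarith

theorem linearIndependent_of_sum_norm_sub_one_lt_one {M : Type*} [AddCommGroup M] [Module K M]
    (φ : M →ₗ[K] ι → K) {f : ι → M}
    (h : ∀ k, ∑ j, ‖φ (f k) j - (1 : Matrix ι ι K) k j‖ < 1) : LinearIndependent K f :=
  (linearIndependent_rows_of_det_ne_zero
    (A := of (φ ∘ f)) (det_ne_zero_of_sum_norm_sub_one_lt_one h)).of_comp φ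

end DiagonalDominance

theorem abs_sub_lt_of_sqrt_sum_sq_lt {ι : Type*} [Fintype ι] {x y : ι → ℝ} {δ : ℝ}
    (h : Real.sqrt (∑ r, (x r - y r) ^ 2) < δ) (r : ι) : |x r - y r| < δ :=
  (Real.abs_le_sqrt <| Finset.single_le_sum (f := fun r ↦ (x r - y r) ^ 2)
    (fun _ _ ↦ sq_nonneg _) (Finset.mem_univ r)).trans_lt h

theorem sum_ite_mem_sym2_of_not_isDiag {V R : Type*} [Fintype V] [DecidableEq V]
    [NonAssocSemiring R] {e : Sym2 V} (he : ¬ e.IsDiag) (a : R) :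
    ∑ v, (if v ∈ e then a else 0) = 2 * a := by
  have endpoints : Finset.univ.filter (· ∈ e) = e.toFinset := by ext; simp
  rw [← Finset.sum_filter, endpoints, Finset.sum_const, Sym2.card_toFinset_of_not_isDiag e he,
    two_nsmul, two_mul]

section Columns

variable {V : Type*}

/-- The inclusion of the rows `V ⊔ {ε}` of `M(G)` into all rows. Leaving out the rows `{1,2,3}`
makes the columns of the vertices and of one edge a square matrix. -/
def vertexOrEpsRow : V ⊕ Unit → V ⊕ Fin 3 ⊕ Unit :=
  Sum.map id Sum.inr

variable [Fintype V] [DecidableEq V] (G : SimpleGraph V) [DecidableRel G.Adj]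

theorem MG_vertexOrEpsRow_vertex (t : ℝ) (v : V) (i : Fin 3) (k : V ⊕ Unit) :
    MG G t (vertexOrEpsRow k) (Sum.inl (v, i)) =
      (1 : Matrix (V ⊕ Unit) (V ⊕ Unit) ℝ) (Sum.inl v) k := by
  rcases k with u | _ <;> simp [MG, vertexOrEpsRow, one_apply, eq_comm]

theorem sum_norm_inv_mul_MG_edge_sub_one {t : ℝ} (ht : t ≠ 0) (e : G.edgeSet) :
    ∑ k, ‖t⁻¹ * MG G t (vertexOrEpsRow k) (Sum.inr e) -
      (1 : Matrix (V ⊕ Unit) (V ⊕ Unit) ℝ) (Sum.inr ()) k‖ = 2 * |t| := by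
  have vertex_entry (u : V) : ‖t⁻¹ * MG G t (vertexOrEpsRow (Sum.inl u)) (Sum.inr e) -
      (1 : Matrix (V ⊕ Unit) (V ⊕ Unit) ℝ) (Sum.inr ()) (Sum.inl u)‖ =
        if u ∈ (e : Sym2 V) then |t| else 0 := by
    by_cases hu : u ∈ (e : Sym2 V)
    · simp [MG, vertexOrEpsRow, hu, pow_two, ht]
    · simp [MG, vertexOrEpsRow, hu]
  have eps_entry : ‖t⁻¹ * MG G t (vertexOrEpsRow (Sum.inr ())) (Sum.inr e) -
      (1 : Matrix (V ⊕ Unit) (V ⊕ Unit) ℝ) (Sum.inr ()) (Sum.inr ())‖ = 0 := by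
    simp [MG, vertexOrEpsRow, ht]
  simp only [Fintype.sum_sum_type, Finset.univ_unique, PUnit.default_eq_unit,
    Finset.sum_singleton, vertex_entry, eps_entry, add_zero]
  exact sum_ite_mem_sym2_of_not_isDiag (G.not_isDiag_of_mem_edgeSet e.2) |t|

variable {G}

theorem linearIndependent_sumElim_smul_edge_column {t : ℝ} (ht0 : t ≠ 0) (ht : |t| < 1 / 2)
    (e : G.edgeSet) (i : V → Fin 3) {C : V → V ⊕ Fin 3 ⊕ Unit → ℝ}
    (hC : ∀ v k, |C v (vertexOrEpsRow k) - MG G t (vertexOrEpsRow k) (Sum.inl (v, i v))| <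
      1 / (Fintype.card V + 1)) :
    LinearIndependent ℝ
      (Sum.elim C fun _ : Unit ↦ t⁻¹ • fun r ↦ MG G t r (Sum.inr e)) := by
  refine linearIndependent_of_sum_norm_sub_one_lt_one
    (LinearMap.funLeft ℝ ℝ vertexOrEpsRow) ?_
  rintro (v | ⟨⟩)
  · calc ∑ k, ‖C v (vertexOrEpsRow k) - (1 : Matrix (V ⊕ Unit) (V ⊕ Unit) ℝ) (Sum.inl v) k‖
        < ∑ _k : V ⊕ Unit, (1 / (Fintype.card V + 1) : ℝ) :=
          Finset.sum_lt_sum_of_nonempty ⟨Sum.inr (), Finset.mem_univ _⟩ fun k _ ↦ by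
            rw [← MG_vertexOrEpsRow_vertex G t v (i v), Real.norm_eq_abs]
            exact hC v k
      _ = 1 := by
          simp only [Finset.sum_const, Finset.card_univ, Fintype.card_sum, Fintype.card_unit,
            nsmul_eq_mul, Nat.cast_add, Nat.cast_one]
          exact mul_one_div_cancel (by positivity)
  · exact (sum_norm_inv_mul_MG_edge_sub_one G ht0 e).trans_lt (by linarith)

end Columns

theorem abs_one_div_four_mul_pow_three_lt_half {x : ℝ} (hx : 1 ≤ x) :
    |1 / (4 * x ^ 3)| < 1 / 2 := by
  have one_le_cube : 1 ≤ x ^ 3 := one_le_pow₀ hx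
  rw [abs_of_pos (by positivity)]
  exact one_div_lt_one_div_of_lt two_pos (by linarith)

theorem no_small_subspace_near_columns_general
    {V : Type*} [Fintype V] [DecidableEq V] {G : SimpleGraph V} [DecidableRel G.Adj]
    {t : ℝ} (ht0 : t ≠ 0) (ht : |t| < 1 / 2) (e : G.edgeSet) (i : V → Fin 3)
    {W : Submodule ℝ ((V ⊕ Fin 3 ⊕ Unit) → ℝ)}
    (he : (fun r => MG G t r (Sum.inr e)) ∈ W)
    (hC : ∀ v : V, ∃ C ∈ W,
      Real.sqrt (∑ r, (C r - MG G t r (Sum.inl (v, i v))) ^ 2) < 1 / (Fintype.card V + 1)) :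
    Fintype.card V < Module.finrank ℝ W := by
  choose C C_mem C_near using hC
  have independent := linearIndependent_sumElim_smul_edge_column ht0 ht e i fun v k ↦
    abs_sub_lt_of_sqrt_sum_sq_lt (C_near v) (vertexOrEpsRow k)
  have span_le : Submodule.span ℝ (Set.range (Sum.elim C fun _ : Unit ↦
      t⁻¹ • fun r ↦ MG G t r (Sum.inr e))) ≤ W := by
    rw [Submodule.span_le]
    rintro _ ⟨v | _, rfl⟩
    exacts [C_mem v, W.smul_mem _ he]
  calc Fintype.card V < Fintype.card (V ⊕ Unit) := by simp
    _ = _ := (finrank_span_eq_card independent).symm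
    _ ≤ Module.finrank ℝ W := Submodule.finrank_mono span_le

/-- For every edge `e ∈ E`, there is no linear subspace of `ℝ^{V ⊕ {1,2,3} ⊕ {ε}}` that is
spanned by at most `n` vectors, contains the column `M(G)(·, e)`, and, for every vertex `v`,
contains some vector `C_v` at Euclidean distance less than `1/(n+1)` from the column
`M(G)(·, (v,1))`. -/
theorem no_small_subspace_near_columns
    {V : Type*} [Fintype V] [DecidableEq V] (G : SimpleGraph V) [DecidableRel G.Adj]
    (n m : ℕ) (hn : n = Fintype.card V) (hm : m = G.edgeFinset.card)
    (hn1 : 1 ≤ n) (hm1 : 1 ≤ m)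
    (t : ℝ) (ht : t = 1 / (4 * (m + n) ^ 3))
    (e : G.edgeSet) :
    ¬ ∃ (W : Submodule ℝ ((V ⊕ Fin 3 ⊕ Unit) → ℝ))
        (vs : Fin n → ((V ⊕ Fin 3 ⊕ Unit) → ℝ)),
        W = Submodule.span ℝ (Set.range vs) ∧
        (fun r => MG G t r (Sum.inr e)) ∈ W ∧
        ∀ v : V, ∃ C ∈ W,
          Real.sqrt (∑ r, (C r - MG G t r (Sum.inl (v, (0 : Fin 3)))) ^ 2) <
            1 / (n + 1) := by
  rintro ⟨W, vs, rfl, he, hC⟩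
  have one_le_size : (1 : ℝ) ≤ m + n := by exact_mod_cast hn1.trans (Nat.le_add_left n m)
  have ht0 : t ≠ 0 := by rw [ht]; positivity
  have ht_half : |t| < 1 / 2 := ht ▸ abs_one_div_four_mul_pow_three_lt_half one_le_size
  have card_lt := no_small_subspace_near_columns_general ht0 ht_half e 0 he (by rwa [← hn])
  exact card_lt.not_ge ((finrank_range_le_card vs).trans_eq ((Fintype.card_fin n).trans hn))
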